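/- Let S be an abelian subgroup of the Pauli group G_d^n with no nontrivial scalars and with Nat.card S = d^n, and let M = R(S) be its image under R. Then M equals its symplectic orthogonal: for every x ∈ (Fin n → ZMod d) × (Fin n → ZMod d), x ∈ M if and only if ω(x, y) = 0 for all y ∈ M. -/

import Mathlib

open Matrix

noncomputable def q (d : ℕ) : ℂ := Complex.exp (2 * Real.pi * Complex.I / d)

/-- Dot product of two vectors over `ZMod d`. -/
def dotp {n d : ℕ} (A B : Fin n → ZMod d) : ZMod d := ∑ i, A i * B i

/-- The Pauli word `W(U,V)` with entries `q^{⟨U,J⟩}` at `(J, K)` when `J = K + V`. -/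
noncomputable def PauliWord (d n : ℕ) (U V : Fin n → ZMod d) :
    Matrix (Fin n → ZMod d) (Fin n → ZMod d) ℂ :=
  Matrix.of fun J K => if J = K + V then q d ^ (dotp U J).val else 0

/-- The n-qudit Pauli group, as a set of matrices. -/
noncomputable def PauliSet (d n : ℕ) : Set (Matrix (Fin n → ZMod d) (Fin n → ZMod d) ℂ) :=
  {g | ∃ (k : ZMod d) (U V : Fin n → ZMod d), g = q d ^ k.val • PauliWord d n U V}

/-- The symplectic product `ω((U1,U2),(V1,V2)) = ⟨U1,V2⟩ - ⟨U2,V1⟩`. -/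
def symp {n d : ℕ} (x y : (Fin n → ZMod d) × (Fin n → ZMod d)) : ZMod d :=
  dotp x.1 y.2 - dotp x.2 y.1

/-!
Let `ψ` be the standard additive character of `ZMod d`. Pauli words multiply up to phases, and
`W x * W y = ψ (ω x y) • (W y * W x)`. Hence commutativity of `S` says that `M = R(S)` is isotropic,
`M ≤ Mᗮ`. Two elements of `S` with the same label differ by a scalar lying in `S`, so `R` is
injective on `S` and `|M| = d ^ n`. Summing `ψ (ω y x)` over `y ∈ M` and all `x` in the two possible
orders gives `|M| * |Mᗮ| = d ^ (2 * n)`, so `|Mᗮ| = |M|` and the inclusion is an equality.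
-/

section Orthogonal

variable {R R' M N : Type*} [CommRing R] [AddCommGroup M] [Module R M] [AddCommGroup N] [Module R N]
  [CommSemiring R'] [IsDomain R'] {ψ : AddChar R R'}

theorem sum_addChar_linearMap_eq_ite [Fintype N] (hψ : ψ.IsPrimitive) (f : N →ₗ[R] R)
    [Decidable (f = 0)] :
    ∑ y, ψ (f y) = if f = 0 then (Fintype.card N : R') else 0 := by
  classical
  have trivial_iff : ψ.compAddMonoidHom f.toAddMonoidHom = 0 ↔ f = 0 := by
    refine ⟨fun h ↦ LinearMap.ext fun y ↦ ?_, fun h ↦ by ext; simp [h]⟩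
    by_contra hy
    -- the image of `f` is an ideal, and a primitive character is nontrivial on every nonzero one
    refine hψ hy (DFunLike.ext _ _ fun r ↦ ?_)
    simpa [mul_comm] using DFunLike.congr_fun h (r • y)
  simpa [trivial_iff] using AddChar.sum_eq_ite (ψ.compAddMonoidHom f.toAddMonoidHom)

theorem card_mul_card_orthogonalBilin [CharZero R'] [Finite M] [Finite N] (hψ : ψ.IsPrimitive)
    {B : M →ₗ[R] N →ₗ[R] R} (hB : B.SeparatingLeft) (L : Submodule R M) :
    Nat.card L * Nat.card (L.orthogonalBilin B) = Nat.card N := by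
  classical
  have := Fintype.ofFinite N
  have := Fintype.ofFinite L
  have sum_right (y : L) :
      ∑ x, ψ (B y x) = if y = 0 then (Nat.card N : R') else 0 := by
    have apply_eq_zero_iff : B y = 0 ↔ y = 0 := by
      rw [← LinearMap.mem_ker, LinearMap.separatingLeft_iff_ker_eq_bot.1 hB, Submodule.mem_bot,
        ZeroMemClass.coe_eq_zero]
    simp [sum_addChar_linearMap_eq_ite hψ, apply_eq_zero_iff]
  have sum_left (x : N) :
      ∑ y : L, ψ (B y x) = if x ∈ L.orthogonalBilin B then (Nat.card L : R') else 0 := by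
    have mem_iff : (B.flip x).domRestrict L = 0 ↔ x ∈ L.orthogonalBilin B := by
      simp [LinearMap.ext_iff]
    simpa [mem_iff] using sum_addChar_linearMap_eq_ite hψ ((B.flip x).domRestrict L)
  have double_count : (Nat.card L * Nat.card (L.orthogonalBilin B) : R') = Nat.card N := by
    calc (Nat.card L * Nat.card (L.orthogonalBilin B) : R')
        = ∑ x, ∑ y : L, ψ (B y x) := by
          simp [sum_left, ← Finset.sum_filter, Fintype.card_subtype, mul_comm]
      _ = ∑ y : L, ∑ x, ψ (B y x) := Finset.sum_comm
      _ = Nat.card N := by simp [sum_right]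
  exact_mod_cast double_count

theorem eq_orthogonalBilin_of_le_of_card [CharZero R'] [Finite M] (hψ : ψ.IsPrimitive)
    {B : LinearMap.BilinForm R M} (hB : B.SeparatingLeft) {L : Submodule R M}
    (hL : L ≤ L.orthogonalBilin B) (hcard : Nat.card L * Nat.card L = Nat.card M) :
    L = L.orthogonalBilin B := by
  have card_eq : Nat.card (L.orthogonalBilin B) = Nat.card L :=
    Nat.eq_of_mul_eq_mul_left Nat.card_pos
      ((card_mul_card_orthogonalBilin hψ hB L).trans hcard.symm)
  exact SetLike.coe_injective (Set.eq_of_subset_of_ncard_le hL card_eq.le)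

end Orthogonal

section SymplecticForm

variable {n d : ℕ}

theorem dotp_eq_dotProduct (A B : Fin n → ZMod d) : dotp A B = A ⬝ᵥ B := rfl

variable (n d) in
/-- The symplectic product `symp`, bundled as a bilinear form on the phase space
`(ZMod d)ⁿ × (ZMod d)ⁿ`. -/
def sympForm : LinearMap.BilinForm (ZMod d) ((Fin n → ZMod d) × (Fin n → ZMod d)) :=
  LinearMap.mk₂ (ZMod d) symp
    (fun x y z ↦ by simp [symp, dotp_eq_dotProduct]; ring)
    (fun c x y ↦ by simp [symp, dotp_eq_dotProduct]; ring)
    (fun x y z ↦ by simp [symp, dotp_eq_dotProduct]; ring)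
    (fun c x y ↦ by simp [symp, dotp_eq_dotProduct]; ring)

@[simp]
theorem sympForm_apply (x y : (Fin n → ZMod d) × (Fin n → ZMod d)) :
    sympForm n d x y = symp x y := rfl

theorem sympForm_isAlt : (sympForm n d).IsAlt := fun x ↦ by
  simp [symp, dotp_eq_dotProduct, dotProduct_comm]

theorem symp_eq_zero_comm (x y : (Fin n → ZMod d) × (Fin n → ZMod d)) :
    symp x y = 0 ↔ symp y x = 0 :=
  sympForm_isAlt.isRefl.eq_iff (x := x) (y := y)

theorem sympForm_separatingLeft : (sympForm n d).SeparatingLeft := fun x hx ↦ by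
  refine Prod.ext (dotProduct_eq_zero _ fun w ↦ ?_) (dotProduct_eq_zero _ fun w ↦ ?_)
  · simpa [symp, dotp_eq_dotProduct] using hx (0, w)
  · simpa [symp, dotp_eq_dotProduct] using hx (w, 0)

end SymplecticForm

section PauliWord

variable {d n : ℕ}

theorem pauliWord_zero : PauliWord d n 0 0 = 1 := by
  ext J K
  simp [PauliWord, Matrix.one_apply, dotp]

theorem pauliWord_ne_zero (U V : Fin n → ZMod d) : PauliWord d n U V ≠ 0 := fun h ↦ by
  simpa [PauliWord, q] using congrFun₂ h V 0

variable [NeZero d]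

theorem q_pow_val_eq_stdAddChar (k : ZMod d) : q d ^ k.val = ZMod.stdAddChar k := by
  calc q d ^ k.val = Complex.exp (2 * Real.pi * Complex.I * (k.val : ℤ) / d) := by
        rw [q, ← Complex.exp_nat_mul]
        congr 1
        push_cast
        ring
    _ = ZMod.stdAddChar k := by
        rw [← ZMod.stdAddChar_coe, Int.cast_natCast, ZMod.natCast_zmod_val]

theorem pauliWord_mul_pauliWord (U V U' V' : Fin n → ZMod d) :
    PauliWord d n U V * PauliWord d n U' V' =
      (ZMod.stdAddChar (-dotp U' V) : ℂ) • PauliWord d n (U + U') (V + V') := by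
  ext J K
  rw [Matrix.mul_apply, Finset.sum_eq_single (J - V)]
  · have index_iff : J - V = K + V' ↔ J = K + (V + V') := by
      rw [sub_eq_iff_eq_add, add_assoc, add_comm V']
    have phase_eq : dotp U J + dotp U' (J - V) = -dotp U' V + dotp (U + U') J := by
      simp only [dotp_eq_dotProduct, dotProduct_sub, add_dotProduct]
      ring
    simp [PauliWord, q_pow_val_eq_stdAddChar, index_iff, ← AddChar.map_add_eq_mul, phase_eq]
  · intro L _ hL
    have hJ : J ≠ L + V := fun h ↦ hL (eq_sub_of_add_eq h.symm)
    simp [PauliWord, hJ]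
  · simp

theorem pauliWord_mul_comm_smul (x y : (Fin n → ZMod d) × (Fin n → ZMod d)) :
    PauliWord d n x.1 x.2 * PauliWord d n y.1 y.2 =
      (ZMod.stdAddChar (symp x y) : ℂ) • (PauliWord d n y.1 y.2 * PauliWord d n x.1 x.2) := by
  have phase_eq : -dotp y.1 x.2 = symp x y + -dotp x.1 y.2 := by
    simp only [symp, dotp_eq_dotProduct, dotProduct_comm y.1]
    ring
  rw [pauliWord_mul_pauliWord, pauliWord_mul_pauliWord, smul_smul, ← AddChar.map_add_eq_mul,
    phase_eq, add_comm y.1, add_comm y.2]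

theorem commute_pauliWord_iff (x y : (Fin n → ZMod d) × (Fin n → ZMod d)) :
    Commute (PauliWord d n x.1 x.2) (PauliWord d n y.1 y.2) ↔ symp x y = 0 := by
  have hne : PauliWord d n y.1 y.2 * PauliWord d n x.1 x.2 ≠ 0 := by
    rw [pauliWord_mul_pauliWord]
    exact smul_ne_zero (AddChar.val_isUnit _ _).ne_zero (pauliWord_ne_zero _ _)
  rw [commute_iff_eq, pauliWord_mul_comm_smul]
  nth_rewrite 2 [← one_smul ℂ (PauliWord d n y.1 y.2 * PauliWord d n x.1 x.2)]
  rw [smul_left_inj hne, ← AddChar.map_zero_eq_one (ZMod.stdAddChar (N := d)),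
    ZMod.injective_stdAddChar.eq_iff]

end PauliWord

/-- A map `R` from matrices to phase space sending `q ^ k • W(U, V)` to its label `(U, V)`. Its
values outside the Pauli group are arbitrary. -/
def IsPauliLabel {d n : ℕ} (R : Matrix (Fin n → ZMod d) (Fin n → ZMod d) ℂ →
    (Fin n → ZMod d) × (Fin n → ZMod d)) : Prop :=
  ∀ (k : ZMod d) (U V : Fin n → ZMod d), R (q d ^ k.val • PauliWord d n U V) = (U, V)

namespace IsPauliLabel

variable {d n : ℕ} [NeZero d] {R : Matrix (Fin n → ZMod d) (Fin n → ZMod d) ℂ →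
  (Fin n → ZMod d) × (Fin n → ZMod d)} {a b : Matrix (Fin n → ZMod d) (Fin n → ZMod d) ℂ}

theorem map_stdAddChar_smul (hR : IsPauliLabel R) (k : ZMod d) (U V : Fin n → ZMod d) :
    R ((ZMod.stdAddChar k : ℂ) • PauliWord d n U V) = (U, V) := by
  rw [← q_pow_val_eq_stdAddChar, hR]

theorem exists_eq_stdAddChar_smul (hR : IsPauliLabel R) (ha : a ∈ PauliSet d n) :
    ∃ k : ZMod d, a = (ZMod.stdAddChar k : ℂ) • PauliWord d n (R a).1 (R a).2 := by
  obtain ⟨k, U, V, rfl⟩ := ha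
  exact ⟨k, by rw [hR, q_pow_val_eq_stdAddChar]⟩

theorem map_one (hR : IsPauliLabel R) : R 1 = 0 := by
  calc R 1 = R ((ZMod.stdAddChar (0 : ZMod d) : ℂ) • PauliWord d n 0 0) := by
        rw [AddChar.map_zero_eq_one, one_smul, pauliWord_zero]
    _ = 0 := hR.map_stdAddChar_smul 0 0 0

theorem map_mul (hR : IsPauliLabel R) (ha : a ∈ PauliSet d n) (hb : b ∈ PauliSet d n) :
    R (a * b) = R a + R b := by
  obtain ⟨k, hk⟩ := hR.exists_eq_stdAddChar_smul ha
  obtain ⟨l, hl⟩ := hR.exists_eq_stdAddChar_smul hb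
  conv_lhs => rw [hk, hl]
  rw [smul_mul_smul_comm, pauliWord_mul_pauliWord, smul_smul, ← AddChar.map_add_eq_mul,
    ← AddChar.map_add_eq_mul, hR.map_stdAddChar_smul]
  rfl

theorem commute_iff (hR : IsPauliLabel R) (ha : a ∈ PauliSet d n) (hb : b ∈ PauliSet d n) :
    Commute a b ↔ symp (R a) (R b) = 0 := by
  obtain ⟨k, hk⟩ := hR.exists_eq_stdAddChar_smul ha
  obtain ⟨l, hl⟩ := hR.exists_eq_stdAddChar_smul hb
  have phase_ne_zero (m : ZMod d) : (ZMod.stdAddChar m : ℂ) ≠ 0 :=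
    (AddChar.val_isUnit _ m).ne_zero
  conv_lhs => rw [hk, hl]
  rw [Commute.smul_left_iff₀ (phase_ne_zero k), Commute.smul_right_iff₀ (phase_ne_zero l),
    commute_pauliWord_iff]

theorem exists_eq_smul_of_map_eq (hR : IsPauliLabel R) (ha : a ∈ PauliSet d n)
    (hb : b ∈ PauliSet d n) (hab : R a = R b) : ∃ c : ℂ, a = c • b := by
  obtain ⟨k, hk⟩ := hR.exists_eq_stdAddChar_smul ha
  obtain ⟨l, hl⟩ := hR.exists_eq_stdAddChar_smul hb
  refine ⟨ZMod.stdAddChar (k - l), ?_⟩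
  rw [hk, hab, hl, hR.map_stdAddChar_smul, smul_smul, ← AddChar.map_add_eq_mul, sub_add_cancel]

variable {S : Submonoid (Matrix (Fin n → ZMod d) (Fin n → ZMod d) ℂ)}

theorem injOn (hR : IsPauliLabel R) (hS : (S : Set _) ⊆ PauliSet d n)
    (hinv : ∀ a ∈ S, ∃ b ∈ S, a * b = 1)
    (hscal : ∀ c : ℂ, c • (1 : Matrix (Fin n → ZMod d) (Fin n → ZMod d) ℂ) ∈ S →
      c • (1 : Matrix (Fin n → ZMod d) (Fin n → ZMod d) ℂ) = 1) :
    Set.InjOn R S := by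
  intro a ha b hb hab
  obtain ⟨c, rfl⟩ := hR.exists_eq_smul_of_map_eq (hS ha) (hS hb) hab
  obtain ⟨b', hb', hbb'⟩ := hinv b hb
  have smul_one_mem : c • (1 : Matrix (Fin n → ZMod d) (Fin n → ZMod d) ℂ) ∈ S := by
    rw [← hbb', ← smul_mul_assoc]
    exact S.mul_mem ha hb'
  rw [← one_mul b, ← smul_mul_assoc, hscal c smul_one_mem]

/-- The image `R(S)` of a group `S` of Pauli matrices, as a submodule of phase space. The group is
given as a submonoid of the matrix ring that contains inverses. -/
def image (hR : IsPauliLabel R) (hS : (S : Set _) ⊆ PauliSet d n)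
    (hinv : ∀ a ∈ S, ∃ b ∈ S, a * b = 1) :
    Submodule (ZMod d) ((Fin n → ZMod d) × (Fin n → ZMod d)) :=
  AddSubgroup.toZModSubmodule d
    { carrier := R '' S
      zero_mem' := ⟨1, S.one_mem, hR.map_one⟩
      add_mem' := by
        rintro _ _ ⟨a, ha, rfl⟩ ⟨b, hb, rfl⟩
        exact ⟨a * b, S.mul_mem ha hb, hR.map_mul (hS ha) (hS hb)⟩
      neg_mem' := by
        rintro _ ⟨a, ha, rfl⟩
        obtain ⟨b, hb, hab⟩ := hinv a ha
        refine ⟨b, hb, (neg_eq_of_add_eq_zero_right ?_).symm⟩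
        rw [← hR.map_mul (hS ha) (hS hb), hab, hR.map_one] }

theorem image_le_orthogonalBilin (hR : IsPauliLabel R) (hS : (S : Set _) ⊆ PauliSet d n)
    (hinv : ∀ a ∈ S, ∃ b ∈ S, a * b = 1) (hcomm : ∀ a ∈ S, ∀ b ∈ S, a * b = b * a) :
    hR.image hS hinv ≤ (hR.image hS hinv).orthogonalBilin (sympForm n d) := by
  rintro _ ⟨a, ha, rfl⟩ _ ⟨b, hb, rfl⟩
  exact (hR.commute_iff (hS hb) (hS ha)).1 (hcomm b hb a ha)

end IsPauliLabel

theorem image_eq_symplectic_orthogonal (d n : ℕ) [NeZero d] (hd : 2 ≤ d) (hn : 1 ≤ n)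
    (Rmap : Matrix (Fin n → ZMod d) (Fin n → ZMod d) ℂ →
      (Fin n → ZMod d) × (Fin n → ZMod d))
    (hR : ∀ (k : ZMod d) (U V : Fin n → ZMod d),
      Rmap (q d ^ k.val • PauliWord d n U V) = (U, V))
    (S : Set (Matrix (Fin n → ZMod d) (Fin n → ZMod d) ℂ))
    (hSsub : S ⊆ PauliSet d n)
    (hS1 : (1 : Matrix (Fin n → ZMod d) (Fin n → ZMod d) ℂ) ∈ S)
    (hSmul : ∀ a ∈ S, ∀ b ∈ S, a * b ∈ S)
    (hSinv : ∀ a ∈ S, ∃ b ∈ S, a * b = 1)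
    (hScomm : ∀ a ∈ S, ∀ b ∈ S, a * b = b * a)
    (hSscal : ∀ c : ℂ, c • (1 : Matrix (Fin n → ZMod d) (Fin n → ZMod d) ℂ) ∈ S →
      c • (1 : Matrix (Fin n → ZMod d) (Fin n → ZMod d) ℂ) = 1)
    (hcard : Nat.card S = d ^ n) :
    ∀ x : (Fin n → ZMod d) × (Fin n → ZMod d),
      x ∈ Rmap '' S ↔ ∀ y ∈ Rmap '' S, symp x y = 0 := by
  let T : Submonoid (Matrix (Fin n → ZMod d) (Fin n → ZMod d) ℂ) :=
    { carrier := S, one_mem' := hS1, mul_mem' := fun ha hb ↦ hSmul _ ha _ hb }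
  have hlabel : IsPauliLabel Rmap := hR
  let M := hlabel.image (S := T) hSsub hSinv
  have card_M : Nat.card M = d ^ n :=
    (hlabel.injOn (S := T) hSsub hSinv hSscal).ncard_image.trans hcard
  have card_phaseSpace : Nat.card ((Fin n → ZMod d) × (Fin n → ZMod d)) = d ^ n * d ^ n := by
    simp
  have M_eq : M = M.orthogonalBilin (sympForm n d) :=
    eq_orthogonalBilin_of_le_of_card (ZMod.isPrimitive_stdAddChar d) sympForm_separatingLeft
      (hlabel.image_le_orthogonalBilin (S := T) hSsub hSinv hScomm)
      (by rw [card_M, card_phaseSpace])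
  intro x
  calc x ∈ M ↔ ∀ y ∈ M, symp y x = 0 := SetLike.ext_iff.1 M_eq x
    _ ↔ ∀ y ∈ M, symp x y = 0 := forall₂_congr fun y _ ↦ symp_eq_zero_comm y x
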